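/- Let A be a countable abelian group and A₁ the intersection of the kernels of all homomorphisms A → ℤ. Then A₁ is a direct summand of A, and A/A₁ is free abelian. Equivalently: there is a free abelian subgroup A₂ ≤ A with A = A₁ ⊕ A₂ and Hom(A₁, ℤ) = 0. -/

import Mathlib

/-- The pure closure of a subgroup. -/
def pureCl {B : Type*} [AddCommGroup B] (N : Submodule ℤ B) : Submodule ℤ B where
  carrier := {y | ∃ m : ℤ, m ≠ 0 ∧ m • y ∈ N}
  zero_mem' := ⟨1, one_ne_zero, by simp⟩
  add_mem' := by
    rintro x y ⟨m, hm, hx⟩ ⟨n, hn, hy⟩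
    refine ⟨m * n, mul_ne_zero hm hn, ?_⟩
    have h1 := N.smul_mem n hx
    have h2 := N.smul_mem m hy
    have h := N.add_mem h1 h2
    rwa [smul_smul, smul_smul, mul_comm n m, ← smul_add] at h
  smul_mem' := by
    rintro c x ⟨m, hm, hx⟩
    refine ⟨m, hm, ?_⟩
    rw [smul_comm]
    exact N.smul_mem c hx

lemma le_pureCl {B : Type*} [AddCommGroup B] (N : Submodule ℤ B) : N ≤ pureCl N :=
  fun _ hx => ⟨1, one_ne_zero, by simpa using hx⟩

lemma pureCl_pure {B : Type*} [AddCommGroup B] (N : Submodule ℤ B) (m : ℤ) (hm : m ≠ 0) (y : B)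
    (h : m • y ∈ pureCl N) : y ∈ pureCl N := by
  obtain ⟨n, hn, h⟩ := h
  exact ⟨n * m, mul_ne_zero hn hm, by rwa [mul_smul]⟩

lemma tf_of_torsionless {B : Type*} [AddCommGroup B]
    (hB : ∀ x : B, (∀ φ : B →ₗ[ℤ] ℤ, φ x = 0) → x = 0) : Module.IsTorsionFree ℤ B := by
  apply Module.IsTorsionFree.of_smul_eq_zero
  intro m x h
  by_cases hm : m = 0
  · exact Or.inl hm
  · right
    apply hB
    intro φ
    have := congrArg φ h
    simpa [hm] using this

lemma pureCl_fg {B : Type*} [AddCommGroup B]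
    (hB : ∀ x : B, (∀ φ : B →ₗ[ℤ] ℤ, φ x = 0) → x = 0) (N : Submodule ℤ B) (hN : N.FG) :
    (pureCl N).FG := by
  have := tf_of_torsionless hB
  have : Module.Finite ℤ N := Module.Finite.iff_fg.mpr hN
  have : Module.Free ℤ N := inferInstance
  let r : (B →ₗ[ℤ] ℤ) →ₗ[ℤ] (N →ₗ[ℤ] ℤ) := LinearMap.lcomp ℤ ℤ N.subtype
  have hr : (LinearMap.range r).FG := IsNoetherian.noetherian _
  obtain ⟨n, f, hf⟩ := Submodule.fg_iff_exists_fin_generating_family.mp hr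
  have hmem : ∀ i, ∃ φ, r φ = f i := fun i => by
    have h : f i ∈ LinearMap.range r := hf ▸ Submodule.subset_span (Set.mem_range_self i)
    exact h
  choose φ hφ using hmem
  let F : B →ₗ[ℤ] (Fin n → ℤ) := LinearMap.pi φ
  have hFN : ∀ x ∈ N, F x = 0 → x = 0 := by
    intro x hx h
    apply hB
    intro ψ
    have h1 : r ψ ∈ Submodule.span ℤ (Set.range f) := by
      rw [hf]
      exact ⟨ψ, rfl⟩
    have h2 : Submodule.span ℤ (Set.range f) ≤
        LinearMap.ker (LinearMap.applyₗ (R := ℤ) (M₂ := ℤ) (⟨x, hx⟩ : N)) := by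
      rw [Submodule.span_le]
      rintro _ ⟨i, rfl⟩
      rw [← hφ]
      exact congrFun h i
    exact h2 h1
  have hinj : Function.Injective (F ∘ₗ (pureCl N).subtype) := by
    rw [← LinearMap.ker_eq_bot, LinearMap.ker_eq_bot']
    rintro ⟨y, m, hm, hy⟩ h
    have h0 : F y = 0 := h
    have h1 := hFN _ hy (by rw [map_smul, h0, smul_zero])
    apply Subtype.ext
    exact (smul_eq_zero.mp h1).resolve_left hm
  exact Module.Finite.iff_fg.mp (Module.Finite.of_injective _ hinj)

lemma ext_step {B : Type*} [AddCommGroup B]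
    (hB : ∀ x : B, (∀ φ : B →ₗ[ℤ] ℤ, φ x = 0) → x = 0) (s : Set B)
    (hs : LinearIndepOn ℤ id s) (hfg : (Submodule.span ℤ s).FG)
    (hp : ∀ m : ℤ, m ≠ 0 → ∀ y : B, m • y ∈ Submodule.span ℤ s → y ∈ Submodule.span ℤ s) (b : B) :
    ∃ t : Set B, s ⊆ t ∧ b ∈ Submodule.span ℤ t ∧ LinearIndepOn ℤ id t ∧
      (Submodule.span ℤ t).FG ∧
      (∀ m : ℤ, m ≠ 0 → ∀ y : B, m • y ∈ Submodule.span ℤ t → y ∈ Submodule.span ℤ t) := by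
  set S := Submodule.span ℤ s with hS
  let N := S ⊔ Submodule.span ℤ {b}
  have hPfg : (pureCl N).FG := pureCl_fg hB N (hfg.sup (Submodule.fg_span_singleton b))
  set P := pureCl N with hP
  have hSP : S ≤ P := le_sup_left.trans (le_pureCl N)
  have hbP : b ∈ P := le_pureCl N (Submodule.mem_sup_right (Submodule.mem_span_singleton_self b))
  have : Module.IsTorsionFree ℤ (B ⧸ S) := by
    apply Module.IsTorsionFree.of_smul_eq_zero
    intro m x h
    by_cases hm : m = 0
    · exact Or.inl hm
    · right
      obtain ⟨x, rfl⟩ := S.mkQ_surjective x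
      rw [← map_smul] at h
      simp only [Submodule.mkQ_apply, Submodule.Quotient.mk_eq_zero] at h ⊢
      exact hp m hm x h
  let Q := P.map S.mkQ
  have : Module.Finite ℤ Q := Module.Finite.iff_fg.mpr (hPfg.map _)
  let e := Module.Free.chooseBasis ℤ Q
  have hex : ∀ i, ∃ u ∈ P, S.mkQ u = (e i : B ⧸ S) := fun i => (e i).2
  choose u huP hu using hex
  have hfun : S.mkQ ∘ u = Q.subtype ∘ e := funext hu
  have hli : LinearIndependent ℤ (S.mkQ ∘ u) := by
    have h1 := e.linearIndependent.map' Q.subtype (Submodule.ker_subtype _)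
    rw [hfun]
    exact h1
  have huinj : Function.Injective u := hli.injective.of_comp
  have hsp : Submodule.span ℤ (s ∪ Set.range u) = P := by
    apply le_antisymm
    · rw [Submodule.span_le]
      rintro x (hx | ⟨i, rfl⟩)
      · exact hSP (Submodule.subset_span hx)
      · exact huP i
    · intro x hx
      rw [Submodule.span_union, ← hS]
      have h1 : S.mkQ x ∈ (Submodule.span ℤ (Set.range u)).map S.mkQ := by
        have h2 : (⟨S.mkQ x, Submodule.mem_map_of_mem hx⟩ : Q) ∈ Submodule.span ℤ (Set.range e) := by
          rw [e.span_eq]; trivial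
        have h3 := Submodule.mem_map_of_mem (f := Q.subtype) h2
        rw [Submodule.map_span, ← Set.range_comp] at h3 ⊢
        rw [hfun]
        exact h3
      obtain ⟨y, hy, hxy⟩ := h1
      have h4 : x - y ∈ S := by
        rw [← Submodule.Quotient.mk_eq_zero, ← Submodule.mkQ_apply, map_sub, hxy, sub_self]
      have := Submodule.add_mem_sup h4 hy
      simpa using this
  refine ⟨s ∪ Set.range u, Set.subset_union_left, ?_, ?_, ?_, ?_⟩
  · rwa [hsp]
  · apply LinearIndepOn.union_of_quotient hs
    rw [Set.image_id, ← hS]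
    exact (linearIndepOn_range_iff huinj _).mpr hli
  · rwa [hsp]
  · rw [hsp]
    exact pureCl_pure N

lemma free_of_torsionless {B : Type*} [AddCommGroup B] [Countable B]
    (hB : ∀ x : B, (∀ φ : B →ₗ[ℤ] ℤ, φ x = 0) → x = 0) : Module.Free ℤ B := by
  have := tf_of_torsionless hB
  obtain ⟨b, hb⟩ := exists_surjective_nat B
  let T := {s : Set B // LinearIndepOn ℤ id s ∧ (Submodule.span ℤ s).FG ∧
    ∀ m : ℤ, m ≠ 0 → ∀ y : B, m • y ∈ Submodule.span ℤ s → y ∈ Submodule.span ℤ s}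
  have hstep : ∀ (s : T) (x : B), ∃ t : T, s.1 ⊆ t.1 ∧ x ∈ Submodule.span ℤ t.1 := by
    rintro ⟨s, h1, h2, h3⟩ x
    obtain ⟨t, ht1, ht2, ht3⟩ := ext_step hB s h1 h2 h3 x
    exact ⟨⟨t, ht3⟩, ht1, ht2⟩
  choose g hg1 hg2 using hstep
  let s0 : T := ⟨∅, linearIndepOn_empty _ _, by simpa using Submodule.fg_bot, by
    intro m hm y h
    simpa [hm] using h⟩
  let c : ℕ → T := fun n => Nat.rec s0 (fun n s => g s (b n)) n
  have hmono : Monotone (fun n => (c n).1) := monotone_nat_of_le_succ fun n => hg1 (c n) (b n)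
  have hli : LinearIndepOn ℤ id (⋃ n, (c n).1) :=
    linearIndepOn_iUnion_of_directed hmono.directed_le fun n => (c n).2.1
  refine Module.Free.of_basis (Module.Basis.mk hli ?_)
  intro x _
  obtain ⟨n, rfl⟩ := hb x
  have h : b n ∈ Submodule.span ℤ (c (n+1)).1 := hg2 (c n) (b n)
  refine Submodule.span_mono ?_ h
  intro y hy
  exact ⟨⟨y, Set.mem_iUnion.mpr ⟨n+1, hy⟩⟩, rfl⟩

/-- For a countable abelian group A, let A₁ be the intersection of the kernels of
all homomorphisms A → ℤ. Then A₁ is a direct summand of A with a free abelian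
complement A₂, and Hom(A₁, ℤ) = 0. -/
theorem stmt_6 {A : Type*} [AddCommGroup A] [Countable A]
    (A₁ : AddSubgroup A) (hA₁ : A₁ = ⨅ (φ : A →+ ℤ), φ.ker) :
    ∃ A₂ : AddSubgroup A, IsCompl A₁ A₂ ∧ Module.Free ℤ A₂ ∧
      ∀ ψ : A₁ →+ ℤ, ψ = 0 := by
  have hmem : ∀ x, x ∈ A₁ ↔ ∀ φ : A →+ ℤ, φ x = 0 := by
    intro x
    rw [hA₁, AddSubgroup.mem_iInf]
    rfl
  have hfree : Module.Free ℤ (A ⧸ A₁) := by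
    have : Countable (A ⧸ A₁) := (QuotientAddGroup.mk'_surjective A₁).countable
    apply free_of_torsionless
    intro x hx
    obtain ⟨x, rfl⟩ := QuotientAddGroup.mk'_surjective A₁ x
    rw [QuotientAddGroup.mk'_apply, QuotientAddGroup.eq_zero_iff, hmem]
    intro φ
    exact hx (QuotientAddGroup.lift A₁ φ fun y hy => (hmem y).1 hy φ).toIntLinearMap
  let q : A →ₗ[ℤ] (A ⧸ A₁) := (QuotientAddGroup.mk' A₁).toIntLinearMap
  obtain ⟨j, hj⟩ := Module.projective_lifting_property q LinearMap.id
    (QuotientAddGroup.mk'_surjective A₁)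
  have hqj : ∀ y, q (j y) = y := fun y => LinearMap.congr_fun hj y
  have hq : ∀ x, q x = 0 ↔ x ∈ A₁ := fun x => QuotientAddGroup.eq_zero_iff x
  have hjinj : Function.Injective j := Function.LeftInverse.injective hqj
  refine ⟨(LinearMap.range j).toAddSubgroup, ⟨?_, ?_⟩, ?_, ?_⟩
  · rw [AddSubgroup.disjoint_def]
    rintro x hx ⟨y, rfl⟩
    have := (hq _).2 hx
    rw [hqj] at this
    rw [this, map_zero]
  · rw [codisjoint_iff, eq_top_iff]
    intro x _
    have h1 : x - j (q x) ∈ A₁ := by rw [← hq, map_sub, hqj, sub_self]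
    have := AddSubgroup.add_mem_sup h1
      (show j (q x) ∈ (LinearMap.range j).toAddSubgroup from ⟨q x, rfl⟩)
    simpa using this
  · exact Module.Free.of_equiv (LinearEquiv.ofInjective j hjinj)
  · intro ψ
    have h1 : ∀ x, x - j (q x) ∈ A₁ := fun x => by rw [← hq, map_sub, hqj, sub_self]
    let p : A →+ A₁ := AddMonoidHom.codRestrict
      (AddMonoidHom.id A - (j ∘ₗ q).toAddMonoidHom) A₁ h1
    ext x
    have h2 := (hmem x).1 x.2 (ψ.comp p)
    have h3 : p x = x := by
      apply Subtype.ext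
      change (x : A) - j (q x) = x
      rw [(hq x).2 x.2, map_zero, sub_zero]
    rw [AddMonoidHom.comp_apply, h3] at h2
    simpa using h2
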